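/- Let Q be a density matrix on the tensor product H_A ⊗ H_B of finite-dimensional Hilbert spaces, with reduced states Q_A = Tr_B Q and Q_B = Tr_A Q. For r > 1 and s ≥ 1/r, the triangle inequality |HY_r^s(Q_A) − HY_r^s(Q_B)| ≤ HY_r^s(Q) holds. -/

import Mathlib

open scoped ComplexOrder Matrix

/-- The Hu–Ye unified entropy of a Hermitian matrix, computed from its eigenvalues. -/
noncomputable def HY {d : ℕ} {Q : Matrix (Fin d) (Fin d) ℂ}
    (hQ : Q.IsHermitian) (r s : ℝ) : ℝ :=
  (1 / ((1 - r) * s)) * ((∑ i, hQ.eigenvalues i ^ r) ^ s - 1)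

/-- Reduced state on subsystem A (partial trace over B). -/
noncomputable def ptrB {dA dB : ℕ} (Q : Matrix (Fin dA × Fin dB) (Fin dA × Fin dB) ℂ) :
    Matrix (Fin dA) (Fin dA) ℂ :=
  fun a a' => ∑ b, Q (a, b) (a', b)

/-- Reduced state on subsystem B (partial trace over A). -/
noncomputable def ptrA {dA dB : ℕ} (Q : Matrix (Fin dA × Fin dB) (Fin dA × Fin dB) ℂ) :
    Matrix (Fin dB) (Fin dB) ℂ :=
  fun b b' => ∑ a, Q (a, b) (a, b')

lemma aux_scalar (x y z p : ℝ) (hx0 : 0 ≤ x) (hx1 : x ≤ 1) (hy0 : 0 ≤ y) (hy1 : y ≤ 1)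
    (hz : 0 ≤ z) (h : x + y ≤ 1 + z) (hp : 1 ≤ p) : x ^ p + y ^ p ≤ 1 + z ^ p := by
  by_cases hw : x + y ≤ 1
  · have h1 : x ^ p ≤ x := by
      simpa using Real.rpow_le_rpow_of_exponent_ge' hx0 hx1 zero_le_one hp
    have h2 : y ^ p ≤ y := by
      simpa using Real.rpow_le_rpow_of_exponent_ge' hy0 hy1 zero_le_one hp
    have := Real.rpow_nonneg hz p
    linarith
  push Not at hw
  have hzp : (x + y - 1) ^ p ≤ z ^ p :=
    Real.rpow_le_rpow (by linarith) (by linarith) (by linarith)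
  by_cases h1 : x + y - 1 = 1
  · have : x = 1 := by linarith
    have : y = 1 := by linarith
    subst x y
    norm_num at hzp ⊢
    linarith
  have hlt : 0 < 1 - (x + y - 1) := by
    have : x + y - 1 ≤ 1 := by linarith
    have := lt_of_le_of_ne this h1
    linarith
  have hc := (convexOn_rpow hp).2
  have m1 : (1:ℝ) ∈ Set.Ici (0:ℝ) := by simp
  have mw : (x + y - 1) ∈ Set.Ici (0:ℝ) := by simp; linarith
  have ht0 : 0 ≤ (1 - y) / (1 - (x + y - 1)) := by apply div_nonneg <;> linarith
  have ht0' : 0 ≤ (1 - x) / (1 - (x + y - 1)) := by apply div_nonneg <;> linarith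
  have hsum : (1 - y) / (1 - (x + y - 1)) + (1 - x) / (1 - (x + y - 1)) = 1 := by
    rw [← add_div, div_eq_one_iff_eq hlt.ne']; ring
  have e1 := hc m1 mw ht0 ht0' hsum
  have e2 := hc m1 mw ht0' ht0 (by rw [add_comm]; exact hsum)
  simp only [smul_eq_mul, Real.one_rpow] at e1 e2
  have f1 : (1 - y) / (1 - (x + y - 1)) * 1 + (1 - x) / (1 - (x + y - 1)) * (x + y - 1) = x := by
    field_simp; ring
  have f2 : (1 - x) / (1 - (x + y - 1)) * 1 + (1 - y) / (1 - (x + y - 1)) * (x + y - 1) = y := by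
    field_simp; ring
  rw [f1] at e1
  rw [f2] at e2
  set t := (1 - y) / (1 - (x + y - 1))
  set t' := (1 - x) / (1 - (x + y - 1))
  have : t' = 1 - t := by linarith
  rw [this] at e1 e2
  nlinarith

lemma aux_dual {ι : Type*} [Fintype ι] (f : ι → ℝ) (hf : ∀ i, 0 ≤ f i) {r q : ℝ}
    (h : r.HolderConjugate q) : ∃ g : ι → ℝ, (∀ i, 0 ≤ g i) ∧ (∀ i, g i ≤ 1) ∧
      ∑ i, g i ^ q ≤ 1 ∧ ∑ i, f i * g i = (∑ i, f i ^ r) ^ (1 / r) := by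
  obtain ⟨g, hg, hg'⟩ := (NNReal.isGreatest_Lp Finset.univ (fun i => (⟨f i, hf i⟩ : NNReal)) h).1
  have hg2 : ∑ i, (g i : ℝ) ^ q ≤ 1 := by exact_mod_cast hg
  refine ⟨fun i => g i, fun i => (g i).2, fun i => ?_, hg2, ?_⟩
  · have h1 : (g i : ℝ) ^ q ≤ 1 := le_trans
      (Finset.single_le_sum (f := fun i => (g i : ℝ) ^ q)
        (fun j _ => Real.rpow_nonneg (g j).2 q) (Finset.mem_univ i)) hg2
    by_contra hc
    push Not at hc
    have := Real.one_lt_rpow hc h.symm.pos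
    linarith
  · have := congrArg (fun x : NNReal => (x : ℝ)) hg'
    push_cast at this
    exact this

lemma aux_classical {B C : Type*} [Fintype B] [Fintype C] (p : B → C → ℝ)
    (hp : ∀ b c, 0 ≤ p b c) (h1 : ∑ b, ∑ c, p b c = 1) {r : ℝ} (hr : 1 < r) :
    (∑ b, (∑ c, p b c) ^ r) ^ (1 / r) + (∑ c, (∑ b, p b c) ^ r) ^ (1 / r) ≤
      1 + (∑ j : B × C, p j.1 j.2 ^ r) ^ (1 / r) := by
  have h := Real.HolderConjugate.conjExponent hr
  set q := r.conjExponent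
  obtain ⟨x, x0, x1, xq, hx⟩ := aux_dual (fun b => ∑ c, p b c)
    (fun b => Finset.sum_nonneg fun c _ => hp b c) h
  obtain ⟨y, y0, y1, yq, hy⟩ := aux_dual (fun c => ∑ b, p b c)
    (fun c => Finset.sum_nonneg fun b _ => hp b c) h
  rw [← hx, ← hy]
  have hol := Real.inner_le_Lp_mul_Lq_of_nonneg (Finset.univ : Finset (B × C))
    (f := fun j => p j.1 j.2) (g := fun j => x j.1 * y j.2) h (fun j _ => hp _ _)
    (fun j _ => mul_nonneg (x0 _) (y0 _))
  have hxy : ∑ j : B × C, (x j.1 * y j.2) ^ q ≤ 1 := by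
    rw [Fintype.sum_prod_type]
    simp only [fun b c => Real.mul_rpow (z := q) (x0 b) (y0 c), ← Finset.mul_sum,
      ← Finset.sum_mul]
    exact mul_le_one₀ xq (Finset.sum_nonneg fun c _ => Real.rpow_nonneg (y0 c) _) yq
  have hxy' : (∑ j : B × C, (x j.1 * y j.2) ^ q) ^ (1 / q) ≤ 1 :=
    Real.rpow_le_one (Finset.sum_nonneg fun c _ => Real.rpow_nonneg (mul_nonneg (x0 _) (y0 _)) _)
      hxy (by have := h.symm.pos; positivity)
  have hN : 0 ≤ (∑ j : B × C, p j.1 j.2 ^ r) ^ (1 / r) :=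
    Real.rpow_nonneg (Finset.sum_nonneg fun c _ => Real.rpow_nonneg (hp _ _) _) _
  have hol2 := hol.trans (mul_le_of_le_one_right hN hxy')
  refine le_trans ?_ (add_le_add_right hol2 1)
  rw [← h1, Fintype.sum_prod_type]
  simp only [Finset.sum_mul]
  rw [Finset.sum_comm (f := fun c b => p b c * y c)]
  simp only [← Finset.sum_add_distrib]
  refine Finset.sum_le_sum fun b _ => Finset.sum_le_sum fun c _ => ?_
  have := mul_nonneg (hp b c) (mul_nonneg (sub_nonneg.2 (x1 b)) (sub_nonneg.2 (y1 c)))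
  nlinarith

lemma aux_bessel {J A : Type*} [Fintype J] [Fintype A] [DecidableEq A] (M : J → A → ℂ)
    (μ : A → ℝ)
    (hM : ∀ a a', ∑ j, M j a * star (M j a') = if a = a' then (μ a : ℂ) else 0) (j : J) :
    ∑ a, Complex.normSq (M j a) / μ a ≤ 1 := by
  set S := ∑ a, Complex.normSq (M j a) / μ a with hS
  let x : A → ℂ := fun a => star (M j a) / μ a
  let v : J → ℂ := fun i => ∑ a, M i a * x a
  have hv : v j = S := by
    simp only [v, x, hS]
    push_cast
    refine Finset.sum_congr rfl fun a _ => ?_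
    rw [← Complex.mul_conj]
    simp [mul_div_assoc]
  have hn : ((∑ i, Complex.normSq (v i) : ℝ) : ℂ) = S := by
    have : ∀ i, ((Complex.normSq (v i) : ℝ) : ℂ)
        = ∑ a, ∑ a', x a * star (x a') * (M i a * star (M i a')) := by
      intro i
      rw [← Complex.mul_conj]
      simp only [v, map_sum, Finset.sum_mul_sum]
      refine Finset.sum_congr rfl fun a _ => Finset.sum_congr rfl fun a' _ => ?_
      simp
      ring
    push_cast
    simp only [this]
    rw [Finset.sum_comm]
    have : ∀ a, ∑ i, ∑ a', x a * star (x a') * (M i a * star (M i a'))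
        = x a * star (x a) * μ a := by
      intro a
      rw [Finset.sum_comm]
      simp only [← Finset.mul_sum, hM]
      simp
    simp only [this]
    rw [hS]
    push_cast
    refine Finset.sum_congr rfl fun a _ => ?_
    rw [← Complex.mul_conj]
    simp only [x]
    by_cases h0 : μ a = 0
    · simp [h0]
    · have : (μ a : ℂ) ≠ 0 := by exact_mod_cast h0
      simp
      field_simp
  have hn' : ∑ i, Complex.normSq (v i) = S := by exact_mod_cast hn
  have hle : Complex.normSq (v j) ≤ ∑ i, Complex.normSq (v i) :=
    Finset.single_le_sum (f := fun i => Complex.normSq (v i))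
      (fun i _ => Complex.normSq_nonneg _) (Finset.mem_univ j)
  rw [hn', hv, Complex.normSq_ofReal] at hle
  nlinarith

lemma aux_schur {J A : Type*} [Fintype J] [Fintype A] [DecidableEq A] (M : J → A → ℂ)
    (μ : A → ℝ)
    (hM : ∀ a a', ∑ j, M j a * star (M j a') = if a = a' then (μ a : ℂ) else 0)
    {r : ℝ} (hr : 1 < r) :
    ∑ j, (∑ a, Complex.normSq (M j a)) ^ r ≤ ∑ a, μ a ^ r := by
  have hcol : ∀ a, ∑ j, Complex.normSq (M j a) = μ a := by
    intro a
    have := hM a a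
    simp only [if_true] at this
    have h2 : ((∑ j, Complex.normSq (M j a) : ℝ) : ℂ) = μ a := by
      rw [← this]
      push_cast
      refine Finset.sum_congr rfl fun j _ => ?_
      rw [← Complex.mul_conj]; rfl
    exact_mod_cast h2
  have hμ : ∀ a, 0 ≤ μ a := fun a => by
    rw [← hcol]; exact Finset.sum_nonneg fun j _ => Complex.normSq_nonneg _
  have hD : ∀ j a, 0 ≤ Complex.normSq (M j a) / μ a :=
    fun j a => div_nonneg (Complex.normSq_nonneg _) (hμ a)
  have hDm : ∀ j a, Complex.normSq (M j a) = Complex.normSq (M j a) / μ a * μ a := by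
    intro j a
    by_cases h0 : μ a = 0
    · have := hcol a
      rw [h0, Finset.sum_eq_zero_iff_of_nonneg (fun j _ => Complex.normSq_nonneg _)] at this
      rw [this j (Finset.mem_univ j), h0]; simp
    · field_simp
  have hj : ∀ j, (∑ a, Complex.normSq (M j a)) ^ r
      ≤ ∑ a, Complex.normSq (M j a) / μ a * μ a ^ r := by
    intro j
    have hw := Real.inner_le_weight_mul_Lp_of_nonneg Finset.univ hr.le
      (fun a => Complex.normSq (M j a) / μ a) μ (hD j) hμ
    have hR : 0 ≤ ∑ a, Complex.normSq (M j a) / μ a * μ a ^ r :=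
      Finset.sum_nonneg fun a _ => mul_nonneg (hD j a) (Real.rpow_nonneg (hμ a) _)
    have hb := aux_bessel M μ hM j
    have h1 : (∑ a, Complex.normSq (M j a) / μ a) ^ (1 - r⁻¹) ≤ 1 :=
      Real.rpow_le_one (Finset.sum_nonneg fun a _ => hD j a) hb
        (by have := inv_le_one_of_one_le₀ hr.le; linarith)
    have h2 := hw.trans (mul_le_of_le_one_left (Real.rpow_nonneg hR _) h1)
    simp only [← hDm] at h2
    have h3 := Real.rpow_le_rpow (Finset.sum_nonneg fun a _ => Complex.normSq_nonneg _) h2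
      (by linarith : 0 ≤ r)
    rwa [← Real.rpow_mul hR, inv_mul_cancel₀ (by linarith), Real.rpow_one] at h3
  refine (Finset.sum_le_sum fun j _ => hj j).trans ?_
  rw [Finset.sum_comm]
  refine Finset.sum_le_sum fun a _ => ?_
  rw [← Finset.sum_mul, ← Finset.sum_div, hcol]
  exact mul_le_of_le_one_left (Real.rpow_nonneg (hμ a) _) (div_self_le_one _)

lemma aux_core {A B C : Type*} [Fintype A] [Fintype B] [Fintype C] [DecidableEq A]
    (ψ : A → B → C → ℂ) (μ : A → ℝ) (ν : B → ℝ) (l : C → ℝ)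
    (hA : ∀ a a', ∑ b, ∑ c, ψ a b c * star (ψ a' b c) = if a = a' then (μ a : ℂ) else 0)
    (hB : ∀ b, ∑ c, ∑ a, Complex.normSq (ψ a b c) = ν b)
    (hC : ∀ c, ∑ b, ∑ a, Complex.normSq (ψ a b c) = l c)
    (hl : ∑ c, l c = 1) {r s : ℝ} (hr : 1 < r) (hs : 1 / r ≤ s) :
    (∑ b, ν b ^ r) ^ s + (∑ c, l c ^ r) ^ s ≤ 1 + (∑ a, μ a ^ r) ^ s := by
  have hp : ∀ b c, 0 ≤ ∑ a, Complex.normSq (ψ a b c) := fun b c =>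
    Finset.sum_nonneg fun a _ => Complex.normSq_nonneg _
  have hν : ∀ b, 0 ≤ ν b := fun b => by
    rw [← hB]; exact Finset.sum_nonneg fun c _ => hp b c
  have hl0 : ∀ c, 0 ≤ l c := fun c => by
    rw [← hC]; exact Finset.sum_nonneg fun b _ => hp b c
  have hμ : ∀ a, 0 ≤ μ a := fun a => by
    have := hA a a
    simp only [if_true] at this
    have h2 : ((∑ b, ∑ c, Complex.normSq (ψ a b c) : ℝ) : ℂ) = μ a := by
      rw [← this]
      push_cast
      refine Finset.sum_congr rfl fun j _ => Finset.sum_congr rfl fun k _ => ?_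
      rw [← Complex.mul_conj]; rfl
    have h3 : ∑ b, ∑ c, Complex.normSq (ψ a b c) = μ a := by exact_mod_cast h2
    rw [← h3]
    exact Finset.sum_nonneg fun b _ => Finset.sum_nonneg fun c _ => Complex.normSq_nonneg _
  have htot : ∑ b, ∑ c, ∑ a, Complex.normSq (ψ a b c) = 1 := by
    rw [Finset.sum_comm]; simp only [hC, hl]
  have hν1 : ∑ b, ν b = 1 := by simp only [← hB, htot]
  have hcl := aux_classical (fun b c => ∑ a, Complex.normSq (ψ a b c)) hp htot hr
  simp only [hB, hC] at hcl
  have hsch := aux_schur (fun (j : B × C) a => ψ a j.1 j.2) μ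
    (fun a a' => by rw [Fintype.sum_prod_type]; exact hA a a') hr
  have hr0 : 0 < r := by linarith
  have nB : 0 ≤ ∑ b, ν b ^ r := Finset.sum_nonneg fun i _ => Real.rpow_nonneg (hν i) _
  have nC : 0 ≤ ∑ c, l c ^ r := Finset.sum_nonneg fun i _ => Real.rpow_nonneg (hl0 i) _
  have nA : 0 ≤ ∑ a, μ a ^ r := Finset.sum_nonneg fun i _ => Real.rpow_nonneg (hμ i) _
  have oB : ∑ b, ν b ^ r ≤ 1 := by
    rw [← hν1]
    refine Finset.sum_le_sum fun b _ => ?_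
    have : ν b ≤ 1 := by
      rw [← hν1]; exact Finset.single_le_sum (fun i _ => hν i) (Finset.mem_univ b)
    simpa using Real.rpow_le_rpow_of_exponent_ge' (hν b) this zero_le_one hr.le
  have oC : ∑ c, l c ^ r ≤ 1 := by
    rw [← hl]
    refine Finset.sum_le_sum fun b _ => ?_
    have : l b ≤ 1 := by
      rw [← hl]; exact Finset.single_le_sum (fun i _ => hl0 i) (Finset.mem_univ b)
    simpa using Real.rpow_le_rpow_of_exponent_ge' (hl0 b) this zero_le_one hr.le
  have hr1 : 0 ≤ 1 / r := by positivity
  have key := hcl.trans (add_le_add_right (Real.rpow_le_rpow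
    (Finset.sum_nonneg fun j _ => Real.rpow_nonneg (hp _ _) _) hsch hr1) 1)
  have hrs : 1 ≤ r * s := by
    rw [div_le_iff₀ hr0] at hs; linarith
  have := aux_scalar _ _ _ (r * s) (Real.rpow_nonneg nB _) (Real.rpow_le_one nB oB hr1)
    (Real.rpow_nonneg nC _) (Real.rpow_le_one nC oC hr1) (Real.rpow_nonneg nA _) key hrs
  rw [← Real.rpow_mul nA, ← Real.rpow_mul nB, ← Real.rpow_mul nC] at this
  have e : 1 / r * (r * s) = s := by field_simp
  rwa [e] at this

open Kronecker in
lemma aux_ptrB {dA dB : ℕ} (Q : Matrix (Fin dA × Fin dB) (Fin dA × Fin dB) ℂ)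
    (U : Matrix (Fin dA) (Fin dA) ℂ) (W : Matrix (Fin dB) (Fin dB) ℂ) (hW : W * Wᴴ = 1) :
    ptrB ((U ⊗ₖ W)ᴴ * Q * (U ⊗ₖ W)) = Uᴴ * ptrB Q * U := by
  have hW' : ∀ b b', ∑ k, W b k * star (W b' k) = if b = b' then 1 else 0 := by
    intro b b'
    have := congrFun (congrFun hW b) b'
    simpa [Matrix.mul_apply, Matrix.one_apply] using this
  ext a a'
  simp only [ptrB, Matrix.mul_apply, Matrix.conjTranspose_apply, Matrix.kroneckerMap_apply,
    Fintype.sum_prod_type, Finset.sum_mul, Finset.mul_sum]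
  have : ∀ (x : Fin dA) (y : Fin dA),
      ∑ y2, ∑ x2, ∑ b, star (U x a * W x2 b) * Q (x, x2) (y, y2) * (U y a' * W y2 b)
      = ∑ b, star (U x a) * Q (x, b) (y, b) * U y a' := by
    intro x y
    refine Finset.sum_congr rfl fun y2 _ => ?_
    have h : ∀ x2, ∑ b, star (U x a * W x2 b) * Q (x, x2) (y, y2) * (U y a' * W y2 b)
        = star (U x a) * Q (x, x2) (y, y2) * U y a' * ∑ b, W y2 b * star (W x2 b) := by
      intro x2
      rw [Finset.mul_sum]
      refine Finset.sum_congr rfl fun b _ => ?_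
      rw [star_mul']; ring
    simp only [h, hW']
    simp
  rw [Finset.sum_comm]
  refine Finset.sum_congr rfl fun y _ => ?_
  have h2 : ∀ f : Fin dB → Fin dB → Fin dA → Fin dB → ℂ,
      ∑ b, ∑ y2, ∑ x, ∑ x2, f b y2 x x2 = ∑ x, ∑ y2, ∑ x2, ∑ b, f b y2 x x2 := by
    intro f
    rw [Finset.sum_comm]
    have : ∀ y2, ∑ b, ∑ x, ∑ x2, f b y2 x x2 = ∑ x, ∑ x2, ∑ b, f b y2 x x2 := by
      intro y2
      rw [Finset.sum_comm]
      exact Finset.sum_congr rfl fun x _ => Finset.sum_comm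
    simp only [this]
    rw [Finset.sum_comm]
  rw [h2]
  exact Finset.sum_congr rfl fun x _ => this x y

open Kronecker in
lemma aux_ptrA {dA dB : ℕ} (Q : Matrix (Fin dA × Fin dB) (Fin dA × Fin dB) ℂ)
    (U : Matrix (Fin dA) (Fin dA) ℂ) (W : Matrix (Fin dB) (Fin dB) ℂ) (hU : U * Uᴴ = 1) :
    ptrA ((U ⊗ₖ W)ᴴ * Q * (U ⊗ₖ W)) = Wᴴ * ptrA Q * W := by
  have h := aux_ptrB (Q.submatrix Prod.swap Prod.swap) W U hU
  have e : ptrB (Q.submatrix Prod.swap Prod.swap) = ptrA Q := rfl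
  rw [e] at h
  rw [← h]
  have e2 : ((W ⊗ₖ U)ᴴ * Q.submatrix Prod.swap Prod.swap * (W ⊗ₖ U))
      = ((U ⊗ₖ W)ᴴ * Q * (U ⊗ₖ W)).submatrix Prod.swap Prod.swap := by
    have hk : W ⊗ₖ U = (U ⊗ₖ W).submatrix (Equiv.prodComm _ _) (Equiv.prodComm _ _) := by
      ext i j; simp [mul_comm]
    have hq : Q.submatrix Prod.swap Prod.swap
      = Q.submatrix (Equiv.prodComm (Fin dB) (Fin dA)) (Equiv.prodComm _ _) := rfl
    rw [hk, hq, Matrix.conjTranspose_submatrix, Matrix.submatrix_mul_equiv,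
      Matrix.submatrix_mul_equiv]
    rfl
  rw [e2]
  rfl

lemma aux_diag {n : Type*} [Fintype n] [DecidableEq n] {Q : Matrix n n ℂ} (h : Q.IsHermitian) :
    ∃ U : Matrix n n ℂ, U * Uᴴ = 1 ∧ Uᴴ * U = 1 ∧
      Uᴴ * Q * U = Matrix.diagonal (fun i => (h.eigenvalues i : ℂ)) ∧
      Q = U * Matrix.diagonal (fun i => (h.eigenvalues i : ℂ)) * Uᴴ := by
  have h1 : (h.eigenvectorUnitary : Matrix n n ℂ) * (h.eigenvectorUnitary : Matrix n n ℂ)ᴴ = 1 :=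
    Unitary.coe_mul_star_self h.eigenvectorUnitary
  have h2 : (h.eigenvectorUnitary : Matrix n n ℂ)ᴴ * (h.eigenvectorUnitary : Matrix n n ℂ) = 1 :=
    Unitary.coe_star_mul_self h.eigenvectorUnitary
  have h3 : Q = (h.eigenvectorUnitary : Matrix n n ℂ)
      * Matrix.diagonal (fun i => (h.eigenvalues i : ℂ))
      * (h.eigenvectorUnitary : Matrix n n ℂ)ᴴ := by
    have := h.spectral_theorem
    rw [Unitary.conjStarAlgAut_apply] at this
    exact this
  refine ⟨h.eigenvectorUnitary, h1, h2, ?_, h3⟩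
  generalize (h.eigenvectorUnitary : Matrix n n ℂ) = U at *
  generalize Matrix.diagonal (fun i => (h.eigenvalues i : ℂ)) = D at *
  rw [h3]
  calc Uᴴ * (U * D * Uᴴ) * U = (Uᴴ * U) * D * (Uᴴ * U) := by simp only [Matrix.mul_assoc]
    _ = D := by rw [h2]; simp

open Kronecker in
theorem HY_triangle_inequality {dA dB : ℕ}
    {Q : Matrix (Fin dA × Fin dB) (Fin dA × Fin dB) ℂ}
    (hQ : Q.PosSemidef) (hTr : Q.trace = 1)
    (hQA : (ptrB Q).PosSemidef) (hQB : (ptrA Q).PosSemidef)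
    (r s : ℝ) (hr : 1 < r) (hs : 1 / r ≤ s) :
    |HY hQA.1 r s - HY hQB.1 r s| ≤
      (1 / ((1 - r) * s)) * ((∑ i, hQ.1.eigenvalues i ^ r) ^ s - 1) := by
  obtain ⟨U, U1, U2, U3, -⟩ := aux_diag hQA.1
  obtain ⟨W, W1, W2, W3, -⟩ := aux_diag hQB.1
  obtain ⟨V, V1, V2, -, V4⟩ := aux_diag hQ.1
  have hl0 := hQ.eigenvalues_nonneg
  have hl1 : ∑ i, hQ.1.eigenvalues i = 1 := by
    have := hQ.1.trace_eq_sum_eigenvalues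
    rw [hTr] at this
    apply Complex.ofReal_injective
    push_cast
    exact this.symm
  unfold HY
  generalize hQA.1.eigenvalues = μ at *
  generalize hQB.1.eigenvalues = ν at *
  generalize hQ.1.eigenvalues = l at *
  let E : Matrix (Fin dA × Fin dB) (Fin dA × Fin dB) ℂ :=
    Matrix.diagonal (fun i => ((Real.sqrt (l i) : ℝ) : ℂ))
  have hE : Eᴴ = E := by
    simp only [E, Matrix.diagonal_conjTranspose]
    congr 1; ext i; simp
  have hEE : E * E = Matrix.diagonal (fun i => (l i : ℂ)) := by
    simp only [E, Matrix.diagonal_mul_diagonal]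
    congr 1; ext i
    rw [← Complex.ofReal_mul, Real.mul_self_sqrt (hl0 i)]
  have K1 : (U ⊗ₖ W) * (U ⊗ₖ W)ᴴ = 1 := by
    rw [Matrix.conjTranspose_kronecker, ← Matrix.mul_kronecker_mul, U1, W1, Matrix.one_kronecker_one]
  let N := (U ⊗ₖ W)ᴴ * V * E
  have N1 : N * Nᴴ = (U ⊗ₖ W)ᴴ * Q * (U ⊗ₖ W) := by
    rw [V4, ← hEE]
    simp only [N, Matrix.conjTranspose_mul, Matrix.conjTranspose_conjTranspose, hE,
      Matrix.mul_assoc]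
  have N2 : Nᴴ * N = Matrix.diagonal (fun i => (l i : ℂ)) := by
    simp only [N, Matrix.conjTranspose_mul, Matrix.conjTranspose_conjTranspose, hE]
    calc E * (Vᴴ * (U ⊗ₖ W)) * ((U ⊗ₖ W)ᴴ * V * E)
        = E * (Vᴴ * (((U ⊗ₖ W) * (U ⊗ₖ W)ᴴ) * V)) * E := by simp only [Matrix.mul_assoc]
      _ = _ := by rw [K1, Matrix.one_mul, V2, Matrix.mul_one, hEE]
  have PA := aux_ptrB Q U W W1
  have PB := aux_ptrA Q U W U1
  rw [U3, ← N1] at PA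
  rw [W3, ← N1] at PB
  clear_value N
  have hA : ∀ a a', ∑ b, ∑ c, N (a, b) c * star (N (a', b) c)
      = if a = a' then (μ a : ℂ) else 0 := by
    intro a a'
    have := congrFun (congrFun PA a) a'
    simpa only [ptrB, Matrix.mul_apply, Matrix.conjTranspose_apply, Matrix.diagonal_apply] using this
  have hB : ∀ b b', ∑ a, ∑ c, N (a, b) c * star (N (a, b') c)
      = if b = b' then (ν b : ℂ) else 0 := by
    intro a a'
    have := congrFun (congrFun PB a) a'
    simpa only [ptrA, Matrix.mul_apply, Matrix.conjTranspose_apply, Matrix.diagonal_apply] using this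
  have nsq : ∀ z : ℂ, z * star z = (Complex.normSq z : ℂ) := fun z => Complex.mul_conj z
  have hA' : ∀ a, ∑ c, ∑ b, Complex.normSq (N (a, b) c) = μ a := by
    intro a
    have := hA a a
    simp only [if_true, nsq] at this
    rw [Finset.sum_comm]
    exact_mod_cast this
  have hB' : ∀ b, ∑ c, ∑ a, Complex.normSq (N (a, b) c) = ν b := by
    intro a
    have := hB a a
    simp only [if_true, nsq] at this
    rw [Finset.sum_comm]
    exact_mod_cast this
  have hC : ∀ c, ∑ a, ∑ b, Complex.normSq (N (a, b) c) = l c := by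
    intro c
    have := congrFun (congrFun N2 c) c
    simp only [Matrix.mul_apply, Matrix.conjTranspose_apply, Matrix.diagonal_apply_eq,
      mul_comm (star _), nsq, Fintype.sum_prod_type] at this
    exact_mod_cast this
  have I1 := aux_core (fun a b c => N (a, b) c) μ ν l hA hB'
    (fun c => by rw [Finset.sum_comm]; exact hC c) hl1 hr hs
  have I2 := aux_core (fun b a c => N (a, b) c) ν μ l hB hA' hC hl1 hr hs
  have hr0 : 0 < r := by linarith
  have hs0 : 0 < s := lt_of_lt_of_le (by positivity) hs
  have hK : 1 / ((1 - r) * s) ≤ 0 :=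
    div_nonpos_of_nonneg_of_nonpos zero_le_one
      (mul_nonpos_of_nonpos_of_nonneg (by linarith) hs0.le)
  rw [abs_le]
  constructor <;> nlinarith
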